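/- arXiv:math/0410181 — 6 statements merged into one kernel-verified Lean document; each statement's English description precedes it below -/
import Mathlib

section
/- Let g : ℕ → ℝ satisfy g(0) = 0 and g(k) > 0 for all k ≥ 1. For 0 ≤ α < liminf_{k→∞} g(k) let ρ(α) = (Σ_{k≥0} k·α^k/(g(1)⋯g(k))) / (Σ_{k≥0} α^k/(g(1)⋯g(k))) be the mean of the probability measure μ_α. Then ρ is strictly increasing: for all real α₁, α₂ with 0 < α₁ < α₂ < liminf_{k→∞} g(k), one has ρ(α₁) < ρ(α₂). -/
theorem aux_summable (g : ℕ → ℝ) (hgpos : ∀ k : ℕ, 1 ≤ k → 0 < g k)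
    (α : ℝ) (h : 0 < α)
    (h₂ : ENNReal.ofReal α <
      Filter.liminf (fun k : ℕ => ENNReal.ofReal (g k)) Filter.atTop) :
    Summable (fun k : ℕ => ((k : ℝ) + 1) * (α ^ k / ∏ j ∈ Finset.Icc 1 k, g j)) := by
  obtain ⟨b, hb1, hb2⟩ := ENNReal.lt_iff_exists_nnreal_btwn.1 h₂
  have hαb : α < (b : ℝ) := by
    have := (ENNReal.ofReal_lt_iff_lt_toReal h.le ENNReal.coe_ne_top).1 hb1
    simpa using this
  have hev := Filter.eventually_lt_of_lt_liminf hb2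
  obtain ⟨γ, hγ1, hγ2⟩ := exists_between hαb
  have hbpos : (0 : ℝ) < b := h.trans hαb
  have hP : ∀ k : ℕ, 0 < ∏ j ∈ Finset.Icc 1 k, g j := fun k =>
    Finset.prod_pos (fun j hj => hgpos j (Finset.mem_Icc.1 hj).1)
  refine summable_of_ratio_norm_eventually_le (r := γ / b) ((div_lt_one hbpos).2 hγ2) ?_
  obtain ⟨N, hN⟩ := exists_nat_gt (α / (γ - α))
  filter_upwards [(Filter.tendsto_add_atTop_nat 1).eventually hev, Filter.eventually_ge_atTop N]
    with k hk hkN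
  have hg : (b : ℝ) < g (k + 1) := by
    have h3 := (ENNReal.lt_ofReal_iff_toReal_lt ENNReal.coe_ne_top).1 hk
    simpa using h3
  have hgp : 0 < g (k + 1) := hbpos.trans hg
  have hk2 : ((k : ℝ) + 2) * α ≤ γ * (k + 1) := by
    have h4 : α / (γ - α) < k := hN.trans_le (by exact_mod_cast hkN)
    rw [div_lt_iff₀ (by linarith)] at h4
    nlinarith
  have hPk := hP k
  rw [Real.norm_of_nonneg (by have := hP (k + 1); positivity),
    Real.norm_of_nonneg (by positivity), Finset.prod_Icc_succ_top (by omega)]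
  have hq : 0 < α ^ k / ∏ j ∈ Finset.Icc 1 k, g j := by positivity
  have hγp : 0 < γ := h.trans hγ1
  calc (((k + 1 : ℕ) : ℝ) + 1) * (α ^ (k + 1) / ((∏ j ∈ Finset.Icc 1 k, g j) * g (k + 1)))
      = (((k : ℝ) + 2) * α) / g (k + 1) * (α ^ k / ∏ j ∈ Finset.Icc 1 k, g j) := by
        push_cast
        field_simp
        ring
    _ ≤ (γ * (k + 1)) / b * (α ^ k / ∏ j ∈ Finset.Icc 1 k, g j) := by
        gcongr
    _ = _ := by ring

/-- Let `g : ℕ → ℝ` satisfy `g 0 = 0` and `g k > 0` for `k ≥ 1`.  For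
`0 ≤ α < liminf g` let `ρ α = (Σ_k k·α^k/(g 1⋯g k)) / (Σ_k α^k/(g 1⋯g k))` be the mean of
the probability measure `μ_α`.  Then `ρ` is strictly increasing: for all real `α₁, α₂`
with `0 < α₁ < α₂ < liminf_{k→∞} g k`, one has `ρ α₁ < ρ α₂`. -/
theorem density_strictly_increasing
    (g : ℕ → ℝ) (hg0 : g 0 = 0) (hgpos : ∀ k : ℕ, 1 ≤ k → 0 < g k)
    (ρ : ℝ → ℝ)
    (hρ : ∀ α : ℝ, ρ α =
      (∑' k : ℕ, (k : ℝ) * α ^ k / ∏ j ∈ Finset.Icc 1 k, g j) /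
      (∑' k : ℕ, α ^ k / ∏ j ∈ Finset.Icc 1 k, g j))
    (α₁ α₂ : ℝ) (h₁ : 0 < α₁) (h₁₂ : α₁ < α₂)
    (h₂ : ENNReal.ofReal α₂ <
      Filter.liminf (fun k : ℕ => ENNReal.ofReal (g k)) Filter.atTop) :
    ρ α₁ < ρ α₂ := by
  have hα₂ : 0 < α₂ := h₁.trans h₁₂
  have hP : ∀ k : ℕ, 0 < ∏ j ∈ Finset.Icc 1 k, g j := fun k =>
    Finset.prod_pos (fun j hj => hgpos j (Finset.mem_Icc.1 hj).1)
  have key : ∀ α : ℝ, 0 < α → α ≤ α₂ →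
      Summable (fun k : ℕ => (k : ℝ) * α ^ k / ∏ j ∈ Finset.Icc 1 k, g j) ∧
      Summable (fun k : ℕ => α ^ k / ∏ j ∈ Finset.Icc 1 k, g j) ∧
      0 < ∑' k : ℕ, α ^ k / ∏ j ∈ Finset.Icc 1 k, g j := by
    intro α h hle
    have hs := aux_summable g hgpos α h ((ENNReal.ofReal_le_ofReal hle).trans_lt h₂)
    have hq : ∀ k : ℕ, 0 < α ^ k / ∏ j ∈ Finset.Icc 1 k, g j := fun k =>
      div_pos (pow_pos h k) (hP k)
    have hs2 : Summable (fun k : ℕ => α ^ k / ∏ j ∈ Finset.Icc 1 k, g j) := by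
      refine Summable.of_nonneg_of_le (fun k => (hq k).le) (fun k => ?_) hs
      have := hq k
      have hk : (0 : ℝ) ≤ k := Nat.cast_nonneg k
      nlinarith
    refine ⟨?_, hs2, hs2.tsum_pos (fun k => (hq k).le) 0 (hq 0)⟩
    refine (hs.sub hs2).congr (fun k => ?_)
    ring
  obtain ⟨a1, a2, a3⟩ := key α₁ h₁ h₁₂.le
  obtain ⟨b1, b2, b3⟩ := key α₂ hα₂ le_rfl
  set m := ρ α₁ with hm
  rw [hρ α₁] at hm
  rw [hρ α₂, lt_div_iff₀ b3]
  have ha : ∑' k : ℕ, (k : ℝ) * α₁ ^ k / ∏ j ∈ Finset.Icc 1 k, g j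
      = m * ∑' k : ℕ, α₁ ^ k / ∏ j ∈ Finset.Icc 1 k, g j := by
    rw [hm]; field_simp
  have ht : 1 < α₂ / α₁ := (one_lt_div h₁).2 h₁₂
  set c := (α₂ / α₁) ^ m with hc
  have hsa := (a1.hasSum.sub (a2.hasSum.mul_left m)).mul_left c
  have hsb := b1.hasSum.sub (b2.hasSum.mul_left m)
  rw [ha, sub_self, mul_zero] at hsa
  have hid : ∀ k : ℕ, (k : ℝ) * α₂ ^ k / (∏ j ∈ Finset.Icc 1 k, g j)
        - m * (α₂ ^ k / ∏ j ∈ Finset.Icc 1 k, g j)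
      - c * ((k : ℝ) * α₁ ^ k / (∏ j ∈ Finset.Icc 1 k, g j)
        - m * (α₁ ^ k / ∏ j ∈ Finset.Icc 1 k, g j))
      = ((k : ℝ) - m) * ((α₂ / α₁) ^ (k : ℝ) - c) * (α₁ ^ k / ∏ j ∈ Finset.Icc 1 k, g j) := by
    intro k
    have := (hP k).ne'
    rw [Real.rpow_natCast, div_pow]
    field_simp
  have hlt : ∀ k : ℕ, (k : ℝ) ≠ m → 0 < ((k : ℝ) - m) * ((α₂ / α₁) ^ (k : ℝ) - c) *
      (α₁ ^ k / ∏ j ∈ Finset.Icc 1 k, g j) := by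
    intro k hk
    refine mul_pos ?_ (div_pos (pow_pos h₁ k) (hP k))
    rcases lt_or_gt_of_ne hk with h | h
    · exact mul_pos_of_neg_of_neg (sub_neg.2 h)
        (sub_neg.2 (Real.rpow_lt_rpow_of_exponent_lt ht h))
    · exact mul_pos (sub_pos.2 h) (sub_pos.2 (Real.rpow_lt_rpow_of_exponent_lt ht h))
  have hle : ∀ k : ℕ, 0 ≤ ((k : ℝ) - m) * ((α₂ / α₁) ^ (k : ℝ) - c) *
      (α₁ ^ k / ∏ j ∈ Finset.Icc 1 k, g j) := by
    intro k
    by_cases hk : (k : ℝ) = m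
    · simp [hk]
    · exact (hlt k hk).le
  have hsd := hsb.sub hsa
  simp only [hid, sub_zero] at hsd
  obtain ⟨i, hi⟩ : ∃ i : ℕ, (i : ℝ) ≠ m := by
    by_cases h0 : ((0 : ℕ) : ℝ) = m
    · exact ⟨1, by rw [← h0]; norm_num⟩
    · exact ⟨0, h0⟩
  have hpos := hsd.summable.tsum_pos hle i (hlt i hi)
  rw [hsd.tsum_eq] at hpos
  linarith
end

section
/- Assume in addition that k ↦ g(k)/k is nonincreasing on {k ≥ 1} (part of Assumption (ID)). Define the probability measure μ'_α on ℕ by μ'_α(0) = 0 and μ'_α(k) = α^{k−1}/(Z'_α · g(1)⋯g(k−1)) for k ≥ 1, where Z'_α = Σ_{k≥1} α^{k−1}/(g(1)⋯g(k−1)) is the normalization. Then μ'_α is stochastically dominated by the palm marginal μ⁰_α: for every m ∈ ℕ, Σ_{k≥m} μ'_α(k) ≤ Σ_{k≥m} μ⁰_α(k). -/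
theorem tail_aux (a c : ℕ → ℝ) (ha : ∀ k, 0 ≤ a k) (hc : Monotone c)
    (sa : Summable a) (sb : Summable fun k => c k * a k)
    (hA : 0 < ∑' k, a k) (hB : 0 < ∑' k, c k * a k) (m : ℕ) :
    (∑' k, if m ≤ k then a k else 0) / (∑' k, a k) ≤
      (∑' k, if m ≤ k then c k * a k else 0) / (∑' k, c k * a k) := by
  have split : ∀ f : ℕ → ℝ, Summable f → Summable (fun k => if m ≤ k then f k else 0) ∧
      Summable (fun k => if m ≤ k then 0 else f k) ∧
      ∑' k, f k = (∑' k, if m ≤ k then f k else 0) + ∑' k, if m ≤ k then 0 else f k := by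
    intro f hf
    have h1 : Summable (fun k => if m ≤ k then f k else 0) := by
      have := hf.indicator {k | m ≤ k}
      refine this.congr fun k => ?_
      simp [Set.indicator_apply]
    have h2 : Summable (fun k => if m ≤ k then 0 else f k) := by
      have := hf.sub h1
      refine this.congr fun k => ?_
      split_ifs <;> simp
    refine ⟨h1, h2, ?_⟩
    rw [← h1.tsum_add h2]
    refine tsum_congr fun k => ?_
    split_ifs <;> simp
  obtain ⟨a1, a2, a3⟩ := split a sa
  obtain ⟨b1, b2, b3⟩ := split _ sb
  have hT : c m * (∑' k, if m ≤ k then a k else 0) ≤ ∑' k, if m ≤ k then c k * a k else 0 := by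
    rw [← tsum_mul_left]
    refine (a1.mul_left _).tsum_le_tsum (fun k => ?_) b1
    split_ifs with h
    · exact mul_le_mul_of_nonneg_right (hc h) (ha k)
    · simp
  have hH : (∑' k, if m ≤ k then 0 else c k * a k) ≤ c m * (∑' k, if m ≤ k then 0 else a k) := by
    rw [← tsum_mul_left]
    refine b2.tsum_le_tsum (fun k => ?_) (a2.mul_left _)
    split_ifs with h
    · simp
    · exact mul_le_mul_of_nonneg_right (hc (by omega)) (ha k)
  have nT : 0 ≤ ∑' k, if m ≤ k then a k else 0 :=
    tsum_nonneg fun k => by split_ifs; exacts [ha k, le_rfl]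
  have nH : 0 ≤ ∑' k, if m ≤ k then 0 else a k :=
    tsum_nonneg fun k => by split_ifs; exacts [le_rfl, ha k]
  rw [div_le_div_iff₀ hA hB, a3, b3]
  have e1 := mul_le_mul_of_nonneg_left hH nT
  have e2 := mul_le_mul_of_nonneg_right hT nH
  nlinarith

/-- Assume `k ↦ g k / k` is nonincreasing on `{k ≥ 1}` (part of
Assumption (ID)).  With `w k = α^k/(g 1 ⋯ g k)`, `Z_α = Σ_k w k`, `μ_α k = w k / Z_α`,
`ρ = Σ_k k μ_α k`, define the probability measure `μ'_α` on `ℕ` by `μ'_α 0 = 0` and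
`μ'_α k = α^(k-1)/(Z'_α · g 1 ⋯ g (k-1))` for `k ≥ 1`, where
`Z'_α = Σ_{k ≥ 1} α^(k-1)/(g 1 ⋯ g (k-1))`.  Then `μ'_α` is stochastically dominated by
the palm marginal `μ0_α k = (k/ρ) μ_α k`: for every `m : ℕ`,
`Σ_{k ≥ m} μ'_α k ≤ Σ_{k ≥ m} μ0_α k`. -/
theorem stochastic_domination_of_primed_measure
    (g : ℕ → ℝ) (hg0 : g 0 = 0) (hgpos : ∀ k : ℕ, 1 ≤ k → 0 < g k)
    (hID : ∀ k : ℕ, 1 ≤ k → g (k + 1) / ((k : ℝ) + 1) ≤ g k / (k : ℝ))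
    (α : ℝ) (hα0 : 0 < α)
    (hα : ENNReal.ofReal α <
      Filter.liminf (fun k : ℕ => ENNReal.ofReal (g k)) Filter.atTop)
    (w : ℕ → ℝ) (hw : ∀ k : ℕ, w k = α ^ k / ∏ j ∈ Finset.Icc 1 k, g j)
    (Z : ℝ) (hZ : Z = ∑' k : ℕ, w k)
    (ρ : ℝ) (hρ : ρ = ∑' k : ℕ, (k : ℝ) * (w k / Z))
    (Z' : ℝ) (hZ' : Z' = ∑' k : ℕ,
      if 1 ≤ k then α ^ (k - 1) / ∏ j ∈ Finset.Icc 1 (k - 1), g j else 0)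
    (μ' : ℕ → ℝ) (hμ' : ∀ k : ℕ, μ' k =
      if 1 ≤ k then α ^ (k - 1) / (Z' * ∏ j ∈ Finset.Icc 1 (k - 1), g j) else 0)
    (μ0 : ℕ → ℝ) (hμ0 : ∀ k : ℕ, μ0 k = ((k : ℝ) / ρ) * (w k / Z)) :
    ∀ m : ℕ, (∑' k : ℕ, if m ≤ k then μ' k else 0) ≤
      ∑' k : ℕ, if m ≤ k then μ0 k else 0 := by
  intro m
  have wpos : ∀ k, 0 < w k := fun k => by
    rw [hw]
    exact div_pos (pow_pos hα0 k) (Finset.prod_pos fun j hj => hgpos j (Finset.mem_Icc.1 hj).1)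
  have wsucc : ∀ k, w (k + 1) = α / g (k + 1) * w k := fun k => by
    rw [hw, hw, Finset.prod_Icc_succ_top (by omega), pow_succ]
    ring
  -- summability
  obtain ⟨β, hαβ, hβ⟩ := ENNReal.lt_iff_exists_nnreal_btwn.1 hα
  have hev := Filter.eventually_lt_of_lt_liminf hβ
  have hαβ' : α < β := by
    have := (ENNReal.ofReal_lt_iff_lt_toReal hα0.le ENNReal.coe_ne_top).1 hαβ
    simpa using this
  have hβ0 : (0:ℝ) < β := hα0.trans hαβ'
  have hr : α / β < 1 := (div_lt_one hβ0).2 hαβ'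
  obtain ⟨r, hr1, hr2⟩ := exists_between hr
  have hr0 : 0 < α / β := div_pos hα0 hβ0
  have hlim : ∀ᶠ k : ℕ in Filter.atTop, ((k : ℝ) + 1) * (α / β) ≤ k * r := by
    obtain ⟨N, hN⟩ := exists_nat_ge ((α / β) / (r - α / β))
    filter_upwards [Filter.eventually_ge_atTop N] with k hk
    have : (α / β) / (r - α / β) ≤ k := hN.trans (by exact_mod_cast hk)
    rw [div_le_iff₀ (by linarith)] at this
    linarith
  have sb : Summable fun k : ℕ => (k : ℝ) * w k := by
    refine summable_of_ratio_norm_eventually_le hr2 ?_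
    have hev1 := (Filter.tendsto_add_atTop_nat 1).eventually hev
    filter_upwards [hlim, hev1] with k hk hgk
    have hg' : (β : ℝ) < g (k + 1) := by
      have hgk' : (β : ENNReal) < ENNReal.ofReal (g (k + 1)) := hgk
      rw [← ENNReal.ofReal_coe_nnreal] at hgk'
      exact (ENNReal.ofReal_lt_ofReal_iff (hgpos _ (by omega))).1 hgk'
    have h0 := wpos k
    rw [Real.norm_of_nonneg (mul_nonneg (Nat.cast_nonneg _) (wpos _).le),
      Real.norm_of_nonneg (mul_nonneg (Nat.cast_nonneg _) (wpos _).le), wsucc]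
    have h1 : α / g (k + 1) ≤ α / β := div_le_div_of_nonneg_left hα0.le hβ0 hg'.le
    push_cast
    calc ((k : ℝ) + 1) * (α / g (k + 1) * w k) ≤ ((k : ℝ) + 1) * (α / β * w k) := by gcongr
      _ = (((k : ℝ) + 1) * (α / β)) * w k := by ring
      _ ≤ (k * r) * w k := by gcongr
      _ = _ := by ring
  have sw : Summable w := by
    refine (summable_nat_add_iff 1).1 (Summable.of_nonneg_of_le (fun k => (wpos _).le)
      (fun k => ?_) ((summable_nat_add_iff 1).2 sb))
    push_cast
    have := wpos (k + 1)
    have hk : (0:ℝ) ≤ k := Nat.cast_nonneg k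
    nlinarith
  let a : ℕ → ℝ := fun k => if 1 ≤ k then w (k - 1) else 0
  let c : ℕ → ℝ := fun k => (k : ℝ) * α / g k
  have ha : ∀ k, 0 ≤ a k := fun k => by
    simp only [a]; split_ifs; exacts [(wpos _).le, le_rfl]
  have hc : Monotone c := by
    refine monotone_nat_of_le_succ fun k => ?_
    rcases Nat.eq_zero_or_pos k with rfl | hk
    · have := hgpos 1 le_rfl
      simp only [c]
      simp
      positivity
    · have h := hID k hk
      have g1 := hgpos k hk
      have g2 := hgpos (k + 1) (by omega)
      have hk' : (0:ℝ) < k := by exact_mod_cast hk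
      rw [div_le_div_iff₀ (by positivity) hk'] at h
      simp only [c]
      push_cast
      rw [div_le_div_iff₀ g1 g2]
      nlinarith
  have sa : Summable a := by
    refine (summable_nat_add_iff 1).1 (sw.congr fun k => ?_)
    simp [a]
  have hca : ∀ k, c k * a k = (k : ℝ) * w k := by
    intro k
    rcases k with _ | k
    · simp [c]
    · simp only [c, a]
      rw [wsucc]
      simp
      ring
  have hbfun : (fun k => c k * a k) = fun k : ℕ => (k : ℝ) * w k := funext hca
  have sb' : Summable fun k => c k * a k := hbfun ▸ sb
  have hA : 0 < ∑' k, a k := sa.tsum_pos ha 1 (by simpa [a] using wpos 0)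
  have hB : 0 < ∑' k, c k * a k := by
    simp only [hca]
    exact sb.tsum_pos (fun k => mul_nonneg (Nat.cast_nonneg _) (wpos k).le) 1
      (by simpa using wpos 1)
  have hZpos : 0 < Z := hZ ▸ sw.tsum_pos (fun k => (wpos k).le) 0 (wpos 0)
  have key := tail_aux a c ha hc sa sb' hA hB m
  have hZ'A : Z' = ∑' k, a k := by
    rw [hZ']
    refine tsum_congr fun k => ?_
    simp only [a, hw]
  have hρB : ρ * Z = ∑' k, c k * a k := by
    rw [hρ, ← tsum_mul_right]
    refine tsum_congr fun k => ?_
    rw [hca]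
    field_simp
  rw [← hZ'A, ← hρB, ← tsum_div_const, ← tsum_div_const] at key
  convert key using 1
  · refine tsum_congr fun k => ?_
    simp only [a, hμ', hw]
    split_ifs
    · rw [div_div, mul_comm]
    · simp
    · simp
  · refine tsum_congr fun k => ?_
    rw [hμ0, hca]
    split_ifs
    · rw [div_mul_div_comm]
    · simp
end

section
/- Let k ∈ ℤ^d with k ≠ 0 and let ψ : Ω → ℝ be bounded and measurable. Then ∫ g(η_k) ψ(η) dQ_α(η) = α ∫ ψ(η + δ_k) dQ_α(η), where (η + δ_k)_i = η_i + 1 if i = k and η_i otherwise. -/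
open MeasureTheory

/-- Let `Q_α` be the product probability measure on `Ω = ℕ^(ℤ^d)` whose
marginal at site `0` is the palm marginal `μ⁰_α` and whose marginal at every other site is
`μ_α` (the product structure is expressed through the values of `Q` on cylinder sets).
Let `k ∈ ℤ^d`, `k ≠ 0`, and let `ψ : Ω → ℝ` be bounded and measurable.  Then
`∫ g (η k) ψ(η) dQ_α(η) = α ∫ ψ(η + δ_k) dQ_α(η)`, where `(η + δ_k) i = η i + 1` if
`i = k` and `η i` otherwise. -/
theorem computation_lemma_first_identity
    (d : ℕ) (hd : 1 ≤ d)
    (g : ℕ → ℝ) (hg0 : g 0 = 0) (hgpos : ∀ k : ℕ, 1 ≤ k → 0 < g k)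
    (α : ℝ) (hα0 : 0 < α)
    (hα : ENNReal.ofReal α <
      Filter.liminf (fun k : ℕ => ENNReal.ofReal (g k)) Filter.atTop)
    (w : ℕ → ℝ) (hw : ∀ k : ℕ, w k = α ^ k / ∏ j ∈ Finset.Icc 1 k, g j)
    (Z : ℝ) (hZ : Z = ∑' k : ℕ, w k)
    (ρ : ℝ) (hρ : ρ = ∑' k : ℕ, (k : ℝ) * (w k / Z))
    -- the family of one-site marginals: palm measure at the origin, `μ_α` elsewhere
    (ν : (Fin d → ℤ) → Measure ℕ) (hνprob : ∀ i, IsProbabilityMeasure (ν i))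
    (hν0 : ∀ n : ℕ, ν 0 {n} = ENNReal.ofReal (((n : ℝ) / ρ) * (w n / Z)))
    (hνi : ∀ i : Fin d → ℤ, i ≠ 0 → ∀ n : ℕ, ν i {n} = ENNReal.ofReal (w n / Z))
    -- `Q` is the product measure `⊗_i ν i`, characterized on cylinder sets
    (Q : Measure ((Fin d → ℤ) → ℕ)) (hQprob : IsProbabilityMeasure Q)
    (hQ : ∀ (s : Finset (Fin d → ℤ)) (a : (Fin d → ℤ) → ℕ),
      Q {η | ∀ i ∈ s, η i = a i} = ∏ i ∈ s, ν i {a i})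
    (k : Fin d → ℤ) (hk : k ≠ 0)
    (ψ : ((Fin d → ℤ) → ℕ) → ℝ) (hψmeas : Measurable ψ)
    (hψbdd : ∃ C : ℝ, ∀ η, |ψ η| ≤ C) :
    ∫ η, g (η k) * ψ η ∂Q =
      α * ∫ η, ψ (Function.update η k (η k + 1)) ∂Q := by
  classical
  have hT : Measurable (fun η : (Fin d → ℤ) → ℕ => Function.update η k (η k + 1)) := by
    rw [measurable_pi_iff]
    intro i
    by_cases hi : i = k
    · subst hi
      simp only [Function.update_self]
      exact (measurable_pi_apply i).add_const 1
    · simp only [Function.update_of_ne hi]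
      exact measurable_pi_apply i
  have hgm : Measurable (fun η : (Fin d → ℤ) → ℕ => ENNReal.ofReal (g (η k))) :=
    (measurable_of_countable (fun n : ℕ => ENNReal.ofReal (g n))).comp (measurable_pi_apply k)
  have hgnn : ∀ n, 0 ≤ g n := by
    intro n
    rcases Nat.eq_zero_or_pos n with h | h
    · rw [h, hg0]
    · exact (hgpos n h).le
  have hcyl : ∀ (s : Finset (Fin d → ℤ)) (a : (Fin d → ℤ) → ℕ),
      MeasurableSet {η : (Fin d → ℤ) → ℕ | ∀ i ∈ s, η i = a i} := by
    intro s a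
    have : {η : (Fin d → ℤ) → ℕ | ∀ i ∈ s, η i = a i}
        = ⋂ i ∈ s, (fun η : (Fin d → ℤ) → ℕ => η i) ⁻¹' {a i} := by
      ext η; simp
    rw [this]
    exact Finset.measurableSet_biInter s
      (fun i _ => measurable_pi_apply i (measurableSet_singleton _))
  have hrec : ∀ n, g (n + 1) * w (n + 1) = α * w n := by
    intro n
    have h1 : g (n + 1) ≠ 0 := (hgpos (n + 1) (by omega)).ne'
    have h2 : ∏ j ∈ Finset.Icc 1 n, g j ≠ 0 :=
      Finset.prod_ne_zero_iff.mpr fun j hj => (hgpos j (Finset.mem_Icc.mp hj).1).ne'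
    rw [hw, hw, Finset.prod_Icc_succ_top (by omega)]
    field_simp
    ring
  -- the two measures agree on cylinders constraining the site k
  have key : ∀ (s : Finset (Fin d → ℤ)) (a : (Fin d → ℤ) → ℕ), k ∈ s →
      (Q.withDensity (fun η => ENNReal.ofReal (g (η k)))) {η | ∀ i ∈ s, η i = a i} =
      (ENNReal.ofReal α • Q.map (fun η => Function.update η k (η k + 1)))
        {η | ∀ i ∈ s, η i = a i} := by
    intro s a hks
    rw [withDensity_apply _ (hcyl s a), Measure.smul_apply, Measure.map_apply hT (hcyl s a)]
    have h1 : ∫⁻ η in {η : (Fin d → ℤ) → ℕ | ∀ i ∈ s, η i = a i}, ENNReal.ofReal (g (η k)) ∂Q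
        = ENNReal.ofReal (g (a k)) * Q {η | ∀ i ∈ s, η i = a i} := by
      rw [← setLIntegral_const]
      refine setLIntegral_congr_fun (hcyl s a) ?_
      intro η hη
      simp only [hη k hks]
    rw [h1, smul_eq_mul]
    rcases Nat.eq_zero_or_pos (a k) with h0 | hpos
    · have : (fun η : (Fin d → ℤ) → ℕ => Function.update η k (η k + 1)) ⁻¹'
          {η | ∀ i ∈ s, η i = a i} = ∅ := by
        ext η
        simp only [Set.mem_preimage, Set.mem_ofPred_eq, Set.mem_empty_iff_false, iff_false]
        intro h
        have := h k hks
        simp [h0] at this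
      rw [this, h0, hg0]
      simp
    · obtain ⟨n, hn⟩ : ∃ n, a k = n + 1 := ⟨a k - 1, by omega⟩
      have : (fun η : (Fin d → ℤ) → ℕ => Function.update η k (η k + 1)) ⁻¹'
          {η | ∀ i ∈ s, η i = a i} = {η | ∀ i ∈ s, η i = Function.update a k n i} := by
        ext η
        simp only [Set.mem_preimage, Set.mem_ofPred_eq]
        refine forall₂_congr fun i _ => ?_
        by_cases hi : i = k
        · subst hi
          simp [hn]
        · simp [Function.update_of_ne hi]
      rw [this, hQ, hQ, ← Finset.mul_prod_erase s _ hks, ← Finset.mul_prod_erase s _ hks]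
      have h2 : ∏ i ∈ s.erase k, ν i {Function.update a k n i} = ∏ i ∈ s.erase k, ν i {a i} :=
        Finset.prod_congr rfl fun i hi => by
          rw [Function.update_of_ne (Finset.ne_of_mem_erase hi)]
      rw [h2, ← mul_assoc, ← mul_assoc, Function.update_self, hn, hνi k hk, hνi k hk,
        ← ENNReal.ofReal_mul (hgnn _), ← ENNReal.ofReal_mul hα0.le,
        ← mul_div_assoc, ← mul_div_assoc, hrec]
  have hmeas : Q.withDensity (fun η => ENNReal.ofReal (g (η k))) =
      ENNReal.ofReal α • Q.map (fun η => Function.update η k (η k + 1)) := by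
    refine Measure.ext_of_generateFrom_of_iUnion
      {S | ∃ (s : Finset (Fin d → ℤ)) (a : (Fin d → ℤ) → ℕ), k ∈ s ∧
        S = {η : (Fin d → ℤ) → ℕ | ∀ i ∈ s, η i = a i}}
      (fun n => {η : (Fin d → ℤ) → ℕ | ∀ i ∈ ({k} : Finset (Fin d → ℤ)), η i = n})
      ?_ ?_ ?_ ?_ ?_ ?_
    · apply le_antisymm
      · refine iSup_le fun i => ?_
        rw [← measurable_iff_comap_le]
        refine @measurable_to_countable' ℕ _ _ _ (MeasurableSpace.generateFrom _) _ fun n => ?_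
        have : (fun η : (Fin d → ℤ) → ℕ => η i) ⁻¹' {n} =
            ⋃ b : {b : (Fin d → ℤ) →  ℕ // b i = n ∧ ∃ m, b = Function.update (fun _ => m) i n},
              {η : (Fin d → ℤ) → ℕ | ∀ j ∈ ({i, k} : Finset (Fin d → ℤ)), η j = b.1 j} := by
          ext η
          simp only [Set.mem_preimage, Set.mem_singleton_iff, Set.mem_iUnion, Set.mem_ofPred_eq]
          constructor
          · intro h
            refine ⟨⟨Function.update (fun _ => η k) i n, by simp, _, rfl⟩, fun j hj => ?_⟩
            by_cases hji : j = i
            · subst hji; simpa using h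
            · simp only [Finset.mem_insert, Finset.mem_singleton, hji, false_or] at hj
              subst hj
              simp [Function.update_of_ne hji]
          · rintro ⟨b, hb⟩
            rw [hb i (by simp), b.2.1]
        rw [this]
        have hc : Countable
            {b : (Fin d → ℤ) →  ℕ // b i = n ∧ ∃ m, b = Function.update (fun _ => m) i n} := by
          refine Set.Countable.mono (s₂ := Set.range fun m : ℕ =>
            Function.update (fun _ : Fin d → ℤ => m) i n) ?_ (Set.countable_range _)
          rintro b ⟨_, m, hm⟩
          exact ⟨m, hm.symm⟩
        refine MeasurableSet.iUnion fun b => ?_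
        exact MeasurableSpace.measurableSet_generateFrom ⟨_, _, by simp, rfl⟩
      · refine MeasurableSpace.generateFrom_le ?_
        rintro _ ⟨s, a, _, rfl⟩
        exact hcyl s a
    · rintro _ ⟨s, a, hs, rfl⟩ _ ⟨t, b, ht, rfl⟩ ⟨ζ, hζ1, hζ2⟩
      refine ⟨s ∪ t, ζ, by simp [hs], ?_⟩
      ext η
      simp only [Set.mem_inter_iff, Set.mem_ofPred_eq, Finset.mem_union] at *
      constructor
      · rintro ⟨h1, h2⟩ i (hi | hi)
        · rw [h1 i hi, hζ1 i hi]
        · rw [h2 i hi, hζ2 i hi]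
      · intro h
        exact ⟨fun i hi => by rw [h i (Or.inl hi), hζ1 i hi],
          fun i hi => by rw [h i (Or.inr hi), hζ2 i hi]⟩
    · ext η
      simp
    · intro n
      exact ⟨{k}, fun _ => n, by simp, rfl⟩
    · intro n
      rw [key {k} (fun _ => n) (by simp), Measure.smul_apply, smul_eq_mul,
        Measure.map_apply hT (hcyl _ _)]
      exact ENNReal.mul_ne_top ENNReal.ofReal_ne_top (measure_ne_top _ _)
    · rintro _ ⟨s, a, hs, rfl⟩
      exact key s a hs
  have h1 := integral_withDensity_eq_integral_toReal_smul (μ := Q) hgm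
    (Filter.Eventually.of_forall fun _ => ENNReal.ofReal_lt_top) ψ
  rw [hmeas, integral_smul_measure,
    integral_map hT.aemeasurable hψmeas.aestronglyMeasurable] at h1
  simp only [ENNReal.toReal_ofReal (hgnn _), ENNReal.toReal_ofReal hα0.le, smul_eq_mul] at h1
  exact h1.symm
end

section
/- Let ψ : Ω → ℝ be bounded and measurable. Then ∫ g(η_0) ((η_0 − 1)/η_0) ψ(η) dQ_α(η) = α ∫ ψ(η + δ_0) dQ_α(η), where the integrand on the left is interpreted as 0 when η_0 = 0 (note η_0 ≥ 1 Q_α-almost surely) and (η + δ_0)_i = η_i + 1 if i = 0 and η_i otherwise. -/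
open MeasureTheory

/-- Let `Q_α` be the product probability measure on `Ω = ℕ^(ℤ^d)` whose
marginal at site `0` is the palm marginal `μ⁰_α` and whose marginal at every other site is
`μ_α`.  Let `ψ : Ω → ℝ` be bounded and measurable.  Then
`∫ g (η 0) ((η 0 − 1)/η 0) ψ(η) dQ_α(η) = α ∫ ψ(η + δ_0) dQ_α(η)`, where the integrand on
the left is interpreted as `0` when `η 0 = 0` (note `η 0 ≥ 1` `Q_α`-a.s.; in Lean the
convention `x / 0 = 0` together with `g 0 = 0` makes the formula literally correct) and
`(η + δ_0) i = η i + 1` if `i = 0` and `η i` otherwise. -/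
theorem computation_lemma_second_identity
    (d : ℕ) (hd : 1 ≤ d)
    (g : ℕ → ℝ) (hg0 : g 0 = 0) (hgpos : ∀ k : ℕ, 1 ≤ k → 0 < g k)
    (α : ℝ) (hα0 : 0 < α)
    (hα : ENNReal.ofReal α <
      Filter.liminf (fun k : ℕ => ENNReal.ofReal (g k)) Filter.atTop)
    (w : ℕ → ℝ) (hw : ∀ k : ℕ, w k = α ^ k / ∏ j ∈ Finset.Icc 1 k, g j)
    (Z : ℝ) (hZ : Z = ∑' k : ℕ, w k)
    (ρ : ℝ) (hρ : ρ = ∑' k : ℕ, (k : ℝ) * (w k / Z))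
    (ν : (Fin d → ℤ) → Measure ℕ) (hνprob : ∀ i, IsProbabilityMeasure (ν i))
    (hν0 : ∀ n : ℕ, ν 0 {n} = ENNReal.ofReal (((n : ℝ) / ρ) * (w n / Z)))
    (hνi : ∀ i : Fin d → ℤ, i ≠ 0 → ∀ n : ℕ, ν i {n} = ENNReal.ofReal (w n / Z))
    (Q : Measure ((Fin d → ℤ) → ℕ)) (hQprob : IsProbabilityMeasure Q)
    (hQ : ∀ (s : Finset (Fin d → ℤ)) (a : (Fin d → ℤ) → ℕ),
      Q {η | ∀ i ∈ s, η i = a i} = ∏ i ∈ s, ν i {a i})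
    (ψ : ((Fin d → ℤ) → ℕ) → ℝ) (hψmeas : Measurable ψ)
    (hψbdd : ∃ C : ℝ, ∀ η, |ψ η| ≤ C) :
    ∫ η, g (η 0) * (((η 0 : ℝ) - 1) / (η 0 : ℝ)) * ψ η ∂Q =
      α * ∫ η, ψ (Function.update η 0 (η 0 + 1)) ∂Q := by
  classical
  set f : ℕ → ℝ := fun n => g n * (((n : ℝ) - 1) / (n : ℝ)) with hf
  have hfnn : ∀ n, 0 ≤ f n := by
    intro n
    rcases n with _ | n
    · simp [hf]
    · have h1 := hgpos (n + 1) (by omega)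
      simp only [hf]
      push_cast
      have : (0 : ℝ) ≤ ((n : ℝ) + 1 - 1) / ((n : ℝ) + 1) := by
        rw [add_sub_cancel_right]; positivity
      exact mul_nonneg h1.le this
  have hkey : ∀ n : ℕ, ENNReal.ofReal (f (n + 1)) * ν 0 {n + 1} =
      ENNReal.ofReal α * ν 0 {n} := by
    intro n
    rw [hν0, hν0, ← ENNReal.ofReal_mul (hfnn _), ← ENNReal.ofReal_mul hα0.le]
    congr 1
    have h1 := (hgpos (n + 1) (by omega)).ne'
    have h2 : ∏ j ∈ Finset.Icc 1 n, g j ≠ 0 :=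
      Finset.prod_ne_zero_iff.2 fun j hj => (hgpos j (Finset.mem_Icc.1 hj).1).ne'
    have h3 : g (n + 1) * w (n + 1) = α * w n := by
      rw [hw, hw, Finset.prod_Icc_succ_top (by omega)]
      field_simp
      ring
    have h4 : ((n : ℝ) + 1) ≠ 0 := by positivity
    simp only [hf]
    push_cast
    calc g (n + 1) * (((n : ℝ) + 1 - 1) / ((n : ℝ) + 1)) *
          (((n : ℝ) + 1) / ρ * (w (n + 1) / Z))
        = (g (n + 1) * w (n + 1)) * ((n : ℝ) / ρ / Z) * (((n : ℝ) + 1) / ((n : ℝ) + 1)) := by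
          ring
      _ = α * ((n : ℝ) / ρ * (w n / Z)) := by rw [h3, div_self h4]; ring
  set T : ((Fin d → ℤ) → ℕ) → ((Fin d → ℤ) → ℕ) :=
    fun η => Function.update η 0 (η 0 + 1) with hT
  have hTm : Measurable T := by
    refine measurable_pi_iff.2 fun i => ?_
    by_cases hi : i = 0
    · subst hi
      simp only [hT, Function.update_self]
      fun_prop
    · simp only [hT, Function.update_of_ne hi]
      fun_prop
  have hfm : Measurable fun η : (Fin d → ℤ) → ℕ => ENNReal.ofReal (f (η 0)) :=
    (measurable_of_countable (fun n : ℕ => ENNReal.ofReal (f n))).comp (measurable_pi_apply 0)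
  let cyl : Finset (Fin d → ℤ) → ((Fin d → ℤ) → ℕ) → Set ((Fin d → ℤ) → ℕ) :=
    fun s a => {η | ∀ i ∈ s, η i = a i}
  have hcylm : ∀ s a, MeasurableSet (cyl s a) := by
    intro s a
    have : cyl s a = ⋂ i ∈ s, (fun η : (Fin d → ℤ) → ℕ => η i) ⁻¹' {a i} := by
      ext η; simp [cyl]
    rw [this]
    exact Finset.measurableSet_biInter _ fun i _ =>
      measurable_pi_apply i (measurableSet_singleton _)
  let C : Set (Set ((Fin d → ℤ) → ℕ)) := {S | ∃ s a, (0 : Fin d → ℤ) ∈ s ∧ S = cyl s a}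
  have hpi : IsPiSystem C := by
    rintro _ ⟨s, a, hs, rfl⟩ _ ⟨t, b, ht, rfl⟩ ⟨η, h1, h2⟩
    refine ⟨s ∪ t, η, Finset.mem_union_left _ hs, ?_⟩
    ext ξ
    simp only [cyl, Set.mem_inter_iff, Set.mem_setOf_eq, Finset.mem_union] at *
    constructor
    · rintro ⟨h3, h4⟩ i (hi | hi)
      · rw [h3 i hi, h1 i hi]
      · rw [h4 i hi, h2 i hi]
    · intro h
      exact ⟨fun i hi => by rw [h i (Or.inl hi), h1 i hi],
        fun i hi => by rw [h i (Or.inr hi), h2 i hi]⟩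
  have hgen : (MeasurableSpace.pi : MeasurableSpace ((Fin d → ℤ) → ℕ)) =
      MeasurableSpace.generateFrom C := by
    apply le_antisymm
    · refine iSup_le fun i => ?_
      rintro _ ⟨t, -, rfl⟩
      have : (fun η : (Fin d → ℤ) → ℕ => η i) ⁻¹' t =
          ⋃ n ∈ t, ⋃ m : ℕ, cyl {0, i} (Function.update (fun _ => m) i n) := by
        ext η
        simp only [Set.mem_preimage, Set.mem_iUnion, exists_prop]
        constructor
        · intro h
          refine ⟨η i, h, η 0, ?_⟩
          intro j hj
          by_cases hji : j = i
          · subst hji; simp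
          · rw [Function.update_of_ne hji]
            simp [hji] at hj
            rw [hj]
        · rintro ⟨n, hn, m, h⟩
          have := h i (by simp)
          rw [Function.update_self] at this
          rwa [this]
      rw [this]
      refine MeasurableSet.biUnion (Set.to_countable t) fun n _ => MeasurableSet.iUnion fun m => ?_
      exact MeasurableSpace.measurableSet_generateFrom ⟨_, _, by simp, rfl⟩
    · refine MeasurableSpace.generateFrom_le ?_
      rintro _ ⟨s, a, -, rfl⟩
      exact hcylm s a
  have hL : ∀ s a, (0 : Fin d → ℤ) ∈ s →
      Q.withDensity (fun η => ENNReal.ofReal (f (η 0))) (cyl s a) =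
        ENNReal.ofReal (f (a 0)) * ∏ i ∈ s, ν i {a i} := by
    intro s a hs
    rw [withDensity_apply _ (hcylm s a), ← hQ s a,
      setLIntegral_congr_fun (g := fun _ => ENNReal.ofReal (f (a 0))) (hcylm s a)
        (fun η hη => by simp only [hη 0 hs]), setLIntegral_const]
  have hmeas : Q.withDensity (fun η => ENNReal.ofReal (f (η 0))) =
      ENNReal.ofReal α • Q.map T := by
    refine Measure.ext_of_generateFrom_of_iUnion C (fun n => cyl {0} (fun _ => n)) hgen hpi ?_
      (fun n => ⟨_, _, by simp, rfl⟩) ?_ ?_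
    · ext η
      simp [cyl]
    · intro n
      rw [hL _ _ (by simp)]
      refine ENNReal.mul_ne_top ENNReal.ofReal_ne_top ?_
      simp only [Finset.prod_singleton]
      exact measure_ne_top _ _
    · rintro _ ⟨s, a, hs, rfl⟩
      rw [hL s a hs, Measure.smul_apply, Measure.map_apply hTm (hcylm s a), smul_eq_mul]
      rcases hn : a 0 with _ | n
      · have : T ⁻¹' cyl s a = ∅ := by
          ext η
          simp only [Set.mem_preimage, Set.mem_empty_iff_false, iff_false]
          intro h
          have := h 0 hs
          simp [hT, hn] at this
        simp [this, hf]
      · have : T ⁻¹' cyl s a = cyl s (Function.update a 0 n) := by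
          ext η
          simp only [Set.mem_preimage, cyl, Set.mem_setOf_eq]
          refine forall₂_congr fun i _ => ?_
          by_cases hi : i = 0
          · subst hi; simp [hT, hn]
          · simp [hT, Function.update_of_ne hi]
        rw [this, hQ, ← Finset.mul_prod_erase s _ hs, ← Finset.mul_prod_erase s _ hs,
          Function.update_self, hn, ← mul_assoc, ← mul_assoc, hkey]
        congr 1
        refine Finset.prod_congr rfl fun i hi => ?_
        rw [Function.update_of_ne (Finset.ne_of_mem_erase hi)]
  have e1 : ∫ η, f (η 0) * ψ η ∂Q =
      ∫ η, ψ η ∂(Q.withDensity (fun η => ENNReal.ofReal (f (η 0)))) := by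
    rw [integral_withDensity_eq_integral_toReal_smul hfm (by simp)]
    simp only [ENNReal.toReal_ofReal (hfnn _), smul_eq_mul]
  rw [e1, hmeas, integral_smul_measure, integral_map hTm.aemeasurable
    hψmeas.aestronglyMeasurable, ENNReal.toReal_ofReal hα0.le, smul_eq_mul]
end

section
/- Let j ∈ ℤ^d with j ≠ 0 and let ψ : Ω → ℝ be bounded and measurable. Then ∫ (g(η_0)/η_0) ψ(η) dQ_α(η) = ∫ (g(η_0)/η_0) ψ(T_j η) dQ_α(η), where T_j η is the configuration (T_j η)_i = η_{i+j} + 1_{[i = 0]} − 1_{[i = −j]} (i.e. the tagged particle at the origin jumps by j and the frame is shifted to its new position; T_j η is a well-defined element of ℕ^{ℤ^d} whenever η_0 ≥ 1, which holds Q_α-almost surely), and g(η_0)/η_0 is interpreted as 0 when η_0 = 0. -/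
open MeasureTheory


/-- The cylinder sets whose base contains a given finset generate the product sigma-algebra. -/
lemma cyl_generate {ι : Type*} [Countable ι] [DecidableEq ι] (s₀ : Finset ι) :
    (MeasurableSpace.pi : MeasurableSpace (ι → ℕ)) = MeasurableSpace.generateFrom
      {A | ∃ (s : Finset ι) (a : ι → ℕ), s₀ ⊆ s ∧ A = {η | ∀ i ∈ s, η i = a i}} := by
  apply le_antisymm
  · refine iSup_le fun i => ?_
    rw [← measurable_iff_comap_le]
    refine @measurable_to_countable' _ _ _ _ (_) _ fun n => ?_
    have : (fun η : ι → ℕ => η i) ⁻¹' {n} =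
        ⋃ (a : ι →₀ ℕ) (_ : a i = n), {η | ∀ k ∈ insert i s₀, η k = a k} := by
      ext η
      simp only [Set.mem_preimage, Set.mem_singleton_iff, Set.mem_iUnion, Set.mem_ofPred_eq]
      constructor
      · intro h
        refine ⟨Finsupp.onFinset (insert i s₀) (fun k => if k ∈ insert i s₀ then η k else 0)
          (fun k hk => by by_contra h'; simp [h'] at hk), by simp [h], fun k hk => ?_⟩
        rw [Finsupp.onFinset_apply, if_pos hk]
      · rintro ⟨a, ha, h⟩
        rw [h i (Finset.mem_insert_self _ _), ha]
    rw [this]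
    refine MeasurableSet.iUnion fun a => MeasurableSet.iUnion fun _ => ?_
    exact MeasurableSpace.measurableSet_generateFrom
      ⟨insert i s₀, a, Finset.subset_insert _ _, rfl⟩
  · refine MeasurableSpace.generateFrom_le ?_
    rintro A ⟨s, a, -, rfl⟩
    have : {η : ι → ℕ | ∀ i ∈ s, η i = a i} = ⋂ i ∈ s, (fun η : ι → ℕ => η i) ⁻¹' {a i} := by
      ext; simp
    rw [this]
    exact Finset.measurableSet_biInter _ fun i _ => measurable_pi_apply i (measurableSet_singleton _)

lemma cyl_measurable {ι : Type*} (s : Finset ι) (a : ι → ℕ) :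
    MeasurableSet {η : ι → ℕ | ∀ i ∈ s, η i = a i} := by
  have : {η : ι → ℕ | ∀ i ∈ s, η i = a i} = ⋂ i ∈ s, (fun η : ι → ℕ => η i) ⁻¹' {a i} := by
    ext; simp
  rw [this]
  exact Finset.measurableSet_biInter _ fun i _ => measurable_pi_apply i (measurableSet_singleton _)

/-- Two measures that agree and are finite on cylinders with base containing `s₀` are equal. -/
lemma cyl_ext {ι : Type*} [Countable ι] [DecidableEq ι] (s₀ : Finset ι)
    (μ ν : Measure (ι → ℕ))
    (hfin : ∀ a : ι → ℕ, μ {η | ∀ i ∈ s₀, η i = a i} ≠ ⊤)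
    (h : ∀ (s : Finset ι) (a : ι → ℕ), s₀ ⊆ s →
      μ {η | ∀ i ∈ s, η i = a i} = ν {η | ∀ i ∈ s, η i = a i}) : μ = ν := by
  refine Measure.ext_of_generateFrom_of_cover_subset (cyl_generate s₀) ?_
    (T := Set.range fun a : ι →₀ ℕ => {η : ι → ℕ | ∀ i ∈ s₀, η i = a i}) ?_
    (Set.countable_range _) ?_ ?_ ?_
  · rintro _ ⟨s, a, hs, rfl⟩ _ ⟨t, b, ht, rfl⟩ ⟨η, h1, h2⟩
    refine ⟨s ∪ t, η, hs.trans Finset.subset_union_left, ?_⟩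
    ext ξ
    simp only [Set.mem_inter_iff, Set.mem_ofPred_eq, Finset.mem_union] at *
    constructor
    · rintro ⟨h3, h4⟩ i (hi | hi)
      · rw [h3 i hi, h1 i hi]
      · rw [h4 i hi, h2 i hi]
    · intro h3
      exact ⟨fun i hi => (h3 i (.inl hi)).trans (h1 i hi),
        fun i hi => (h3 i (.inr hi)).trans (h2 i hi)⟩
  · rintro _ ⟨a, rfl⟩
    exact ⟨s₀, a, subset_rfl, rfl⟩
  · refine Set.eq_univ_of_forall fun η => ?_
    refine Set.mem_sUnion.2 ⟨_, ⟨Finsupp.onFinset s₀ (fun k => if k ∈ s₀ then η k else 0)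
          (fun k hk => by by_contra h'; simp [h'] at hk), rfl⟩, fun k hk => ?_⟩
    rw [Finsupp.onFinset_apply, if_pos hk]
  · rintro _ ⟨a, rfl⟩
    exact hfin a
  · rintro _ ⟨s, a, hs, rfl⟩
    exact h s a hs

/-- Let `Q_α` be the product probability measure on `Ω = ℕ^(ℤ^d)` whose
marginal at site `0` is the palm marginal `μ⁰_α` and whose marginal at every other site is
`μ_α`.  Let `j ∈ ℤ^d`, `j ≠ 0`, and let `ψ : Ω → ℝ` be bounded and measurable.  Then
`∫ (g (η 0)/η 0) ψ(η) dQ_α(η) = ∫ (g (η 0)/η 0) ψ(T_j η) dQ_α(η)`, where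
`(T_j η) i = η (i+j) + 1_{i=0} − 1_{i=−j}` (the tagged particle at the origin jumps by `j`
and the frame is shifted to its new position; with truncated `ℕ`-subtraction this is a
well-defined element of `ℕ^(ℤ^d)`, and it agrees with the intended configuration whenever
`η 0 ≥ 1`, which holds `Q_α`-a.s.), and `g (η 0)/η 0` is interpreted as `0` when
`η 0 = 0` (Lean's convention `x / 0 = 0` together with `g 0 = 0` achieves this). -/
theorem computation_lemma_third_identity
    (d : ℕ) (hd : 1 ≤ d)
    (g : ℕ → ℝ) (hg0 : g 0 = 0) (hgpos : ∀ k : ℕ, 1 ≤ k → 0 < g k)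
    (α : ℝ) (hα0 : 0 < α)
    (hα : ENNReal.ofReal α <
      Filter.liminf (fun k : ℕ => ENNReal.ofReal (g k)) Filter.atTop)
    (w : ℕ → ℝ) (hw : ∀ k : ℕ, w k = α ^ k / ∏ j ∈ Finset.Icc 1 k, g j)
    (Z : ℝ) (hZ : Z = ∑' k : ℕ, w k)
    (ρ : ℝ) (hρ : ρ = ∑' k : ℕ, (k : ℝ) * (w k / Z))
    (ν : (Fin d → ℤ) → Measure ℕ) (hνprob : ∀ i, IsProbabilityMeasure (ν i))
    (hν0 : ∀ n : ℕ, ν 0 {n} = ENNReal.ofReal (((n : ℝ) / ρ) * (w n / Z)))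
    (hνi : ∀ i : Fin d → ℤ, i ≠ 0 → ∀ n : ℕ, ν i {n} = ENNReal.ofReal (w n / Z))
    (Q : Measure ((Fin d → ℤ) → ℕ)) (hQprob : IsProbabilityMeasure Q)
    (hQ : ∀ (s : Finset (Fin d → ℤ)) (a : (Fin d → ℤ) → ℕ),
      Q {η | ∀ i ∈ s, η i = a i} = ∏ i ∈ s, ν i {a i})
    (j : Fin d → ℤ) (hj : j ≠ 0)
    (T : ((Fin d → ℤ) → ℕ) → ((Fin d → ℤ) → ℕ))
    (hT : ∀ η i, T η i =
      η (i + j) + (if i = 0 then 1 else 0) - (if i = -j then 1 else 0))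
    (ψ : ((Fin d → ℤ) → ℕ) → ℝ) (hψmeas : Measurable ψ)
    (hψbdd : ∃ C : ℝ, ∀ η, |ψ η| ≤ C) :
    ∫ η, (g (η 0) / (η 0 : ℝ)) * ψ η ∂Q =
      ∫ η, (g (η 0) / (η 0 : ℝ)) * ψ (T η) ∂Q := by
  have hgnn : ∀ k, 0 ≤ g k := fun k => by
    rcases Nat.eq_zero_or_pos k with rfl | h
    · exact hg0.ge
    · exact (hgpos k h).le
  have hwnn : ∀ k, 0 ≤ w k := fun k => by
    rw [hw]
    exact div_nonneg (pow_nonneg hα0.le _) (Finset.prod_nonneg fun i _ => hgnn i)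
  have hZnn : 0 ≤ Z := hZ ▸ tsum_nonneg hwnn
  have hρnn : 0 ≤ ρ := hρ ▸ tsum_nonneg fun k =>
    mul_nonneg (Nat.cast_nonneg k) (div_nonneg (hwnn k) hZnn)
  have hrec : ∀ k, g (k + 1) * w (k + 1) = α * w k := fun k => by
    have h1 : g (k + 1) ≠ 0 := (hgpos _ (by omega)).ne'
    have h2 : ∏ i ∈ Finset.Icc 1 k, g i ≠ 0 :=
      Finset.prod_ne_zero_iff.2 fun i hi => (hgpos _ (Finset.mem_Icc.1 hi).1).ne'
    rw [hw, hw, Finset.prod_Icc_succ_top (by omega)]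
    field_simp
    ring
  set f : ((Fin d → ℤ) → ℕ) → ENNReal := fun η => ENNReal.ofReal (g (η 0) / (η 0 : ℝ)) with hf
  have hfmeas : Measurable f :=
    (measurable_of_countable (fun n : ℕ => ENNReal.ofReal (g n / (n : ℝ)))).comp
      (measurable_pi_apply 0)
  have hTmeas : Measurable T := by
    refine measurable_pi_iff.2 fun i => ?_
    simp only [hT]
    exact (measurable_of_countable (fun n : ℕ =>
      n + (if i = 0 then 1 else 0) - (if i = -j then 1 else 0))).comp (measurable_pi_apply (i + j))
  -- mass of a set which coincides, on the set where `f` is nonzero, with a cylinder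
  have key : ∀ (A : Set ((Fin d → ℤ) → ℕ)) (s : Finset (Fin d → ℤ)) (a : (Fin d → ℤ) → ℕ),
      MeasurableSet A → 0 ∈ s → (∀ η, η 0 ≠ 0 → (η ∈ A ↔ ∀ i ∈ s, η i = a i)) →
      Q.withDensity f A = ENNReal.ofReal (g (a 0) / (a 0 : ℝ)) * ∏ i ∈ s, ν i {a i} := by
    intro A s a hA h0 h
    rw [withDensity_apply _ hA, ← lintegral_indicator hA]
    have : A.indicator f = {η : (Fin d → ℤ) → ℕ | ∀ i ∈ s, η i = a i}.indicator
        (fun _ => ENNReal.ofReal (g (a 0) / (a 0 : ℝ))) := by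
      ext η
      by_cases hη : η 0 = 0
      · have h1 : f η = 0 := by simp [hf, hη]
        have h2 : A.indicator f η = 0 := by
          by_cases hm : η ∈ A
          · rw [Set.indicator_of_mem hm, h1]
          · rw [Set.indicator_of_notMem hm]
        rw [h2]
        by_cases hm : ∀ i ∈ s, η i = a i
        · rw [Set.indicator_of_mem (by exact hm), ← hm 0 h0, hη]
          simp
        · rw [Set.indicator_of_notMem (by exact hm)]
      · by_cases hm : η ∈ A
        · have hm' := (h η hη).1 hm
          rw [Set.indicator_of_mem hm, Set.indicator_of_mem (by exact hm'), ← hm' 0 h0]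
        · have hm' := fun h' => hm ((h η hη).2 h')
          rw [Set.indicator_of_notMem hm, Set.indicator_of_notMem (by exact hm')]
    rw [this, lintegral_indicator (cyl_measurable s a), setLIntegral_const, hQ]
  have hnj : (-j) ≠ 0 := neg_ne_zero.2 hj
  have hmap : Q.withDensity f = (Q.withDensity f).map T := by
    refine cyl_ext {0, -j} _ _ ?_ ?_
    · intro a
      rw [key _ {0, -j} a (cyl_measurable _ a) (by simp) (fun η _ => Iff.rfl)]
      exact ENNReal.mul_ne_top ENNReal.ofReal_ne_top
        (ENNReal.prod_ne_top fun i _ => measure_ne_top _ _)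
    · intro s a hs
      have h0 : (0 : Fin d → ℤ) ∈ s := hs (by simp)
      have hjs : -j ∈ s := hs (by simp)
      rw [Measure.map_apply hTmeas (cyl_measurable s a),
        key _ s a (cyl_measurable s a) h0 (fun η _ => Iff.rfl)]
      have hTA := hTmeas (cyl_measurable s a)
      rcases Nat.eq_zero_or_pos (a 0) with ha | ha
      · have : T ⁻¹' {η | ∀ i ∈ s, η i = a i} = ∅ := by
          ext η
          simp only [Set.mem_preimage, Set.mem_ofPred_eq, Set.mem_empty_iff_false, iff_false]
          intro h
          have := h 0 h0
          rw [hT, if_pos rfl, if_neg hnj.symm, ha] at this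
          omega
        rw [this, ha]
        simp
      obtain ⟨n, hn⟩ : ∃ n, a 0 = n + 1 := ⟨a 0 - 1, by omega⟩
      set b : (Fin d → ℤ) → ℕ := fun k =>
        if k = 0 then a (-j) + 1 else if k = j then n else a (k - j) with hb
      have hb0 : b 0 = a (-j) + 1 := by simp [hb]
      have hbj : b j = n := by simp [hb, hj]
      have hbi : ∀ i, i ≠ 0 → i ≠ -j → b (i + j) = a i := by
        intro i h1 h2
        have h3 : i + j ≠ 0 := fun h => h2 (eq_neg_of_add_eq_zero_left h)
        have h4 : i + j ≠ j := fun h => h1 (by simpa using h)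
        simp [hb, h3, h1]
      rw [key _ (s.map (addRightEmbedding j)) b hTA
        (Finset.mem_map.2 ⟨-j, hjs, by simp⟩) ?_]
      · rw [Finset.prod_map]
        simp only [addRightEmbedding_apply]
        have hsplit : ∀ F : (Fin d → ℤ) → ENNReal,
            ∏ i ∈ s, F i = F 0 * (F (-j) * ∏ i ∈ (s.erase 0).erase (-j), F i) := by
          intro F
          rw [Finset.mul_prod_erase _ _ (Finset.mem_erase.2 ⟨hnj, hjs⟩),
            Finset.mul_prod_erase _ _ h0]
        rw [hsplit (fun i => ν i {a i}), hsplit (fun i => ν (i + j) {b (i + j)})]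
        have hrest : ∏ i ∈ (s.erase 0).erase (-j), ν (i + j) {b (i + j)} =
            ∏ i ∈ (s.erase 0).erase (-j), ν i {a i} := by
          refine Finset.prod_congr rfl fun i hi => ?_
          simp only [Finset.mem_erase] at hi
          rw [hbi i hi.2.1 hi.1, hνi i hi.2.1,
            hνi (i + j) (fun h => hi.1 (eq_neg_of_add_eq_zero_left h))]
        rw [hrest]
        simp only [zero_add, neg_add_cancel]
        rw [hb0, hbj, hn, hνi j hj, hνi (-j) hnj, hν0, hν0]
        simp only [← mul_assoc]
        congr 1
        have e1 : ∀ k : ℕ, 0 ≤ g k / (k : ℝ) := fun k => div_nonneg (hgnn k) (Nat.cast_nonneg k)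
        have e2 : ∀ k : ℕ, 0 ≤ (k : ℝ) / ρ * (w k / Z) := fun k =>
          mul_nonneg (div_nonneg (Nat.cast_nonneg k) hρnn) (div_nonneg (hwnn k) hZnn)
        have e4 : ∀ k : ℕ, g (k + 1) / ((k + 1 : ℕ) : ℝ) * (((k + 1 : ℕ) : ℝ) / ρ * (w (k + 1) / Z))
            = α * w k / ρ / Z := by
          intro k
          have : ((k + 1 : ℕ) : ℝ) ≠ 0 := by positivity
          rw [← hrec k]
          generalize ((k + 1 : ℕ) : ℝ) = c at *
          calc g (k + 1) / c * (c / ρ * (w (k + 1) / Z))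
              = (c / c) * (g (k + 1) * w (k + 1) / ρ / Z) := by ring
            _ = _ := by rw [div_self this, one_mul]
        have e5 : ∀ k : ℕ, 0 ≤ α * w k / ρ / Z := fun k =>
          div_nonneg (div_nonneg (mul_nonneg hα0.le (hwnn k)) hρnn) hZnn
        rw [← ENNReal.ofReal_mul (e1 _), e4, mul_assoc (ENNReal.ofReal _),
          mul_comm (ENNReal.ofReal (w n / Z)), ← mul_assoc, ← ENNReal.ofReal_mul (e1 _), e4,
          ← ENNReal.ofReal_mul (e5 _), ← ENNReal.ofReal_mul (e5 _)]
        congr 1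
        ring
      · intro η hη
        simp only [Set.mem_preimage, Set.mem_ofPred_eq, Finset.mem_map, addRightEmbedding_apply,
          forall_exists_index, and_imp, forall_apply_eq_imp_iff₂]
        refine forall₂_congr fun i hi => ?_
        rw [hT]
        by_cases h1 : i = 0
        · subst h1
          rw [if_pos rfl, if_neg hnj.symm, zero_add, hbj, hn]
          omega
        · by_cases h2 : i = -j
          · subst h2
            rw [if_neg hnj, if_pos rfl, neg_add_cancel, hb0]
            omega
          · rw [if_neg h1, if_neg h2, hbi i h1 h2]
            simp
  have hint : ∀ φ : ((Fin d → ℤ) → ℕ) → ℝ,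
      ∫ η, (g (η 0) / (η 0 : ℝ)) * φ η ∂Q = ∫ η, φ η ∂(Q.withDensity f) := by
    intro φ
    rw [integral_withDensity_eq_integral_toReal_smul hfmeas
      (Filter.Eventually.of_forall fun _ => ENNReal.ofReal_lt_top)]
    refine integral_congr_ae (Filter.Eventually.of_forall fun η => ?_)
    simp only [hf, smul_eq_mul]
    rw [ENNReal.toReal_ofReal (div_nonneg (hgnn _) (Nat.cast_nonneg _))]
  rw [hint ψ, hint (fun η => ψ (T η))]
  conv_lhs => rw [hmap]
  exact integral_map hTmeas.aemeasurable hψmeas.aestronglyMeasurable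
end

section
/- Let j ∈ ℤ^d with j ≠ 0 and let ψ : Ω → ℝ be bounded and measurable. Then ∫ (η_j + 1)(g(η_0)/η_0) ψ(η) dQ_α(η) = ∫ g(η_0) ψ(T_{−j} η) dQ_α(η), where (T_{−j} η)_i = η_{i−j} + 1_{[i = 0]} − 1_{[i = j]} (well defined in ℕ^{ℤ^d} whenever η_0 ≥ 1, which holds Q_α-almost surely), and g(η_0)/η_0 is interpreted as 0 when η_0 = 0. -/
open MeasureTheory

/-- Let `Q_α` be the product probability measure on `Ω = ℕ^(ℤ^d)` whose
marginal at site `0` is the palm marginal `μ⁰_α` and whose marginal at every other site is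
`μ_α`.  Let `j ∈ ℤ^d`, `j ≠ 0`, and let `ψ : Ω → ℝ` be bounded and measurable.  Then
`∫ (η j + 1)(g (η 0)/η 0) ψ(η) dQ_α(η) = ∫ g (η 0) ψ(T_{−j} η) dQ_α(η)`, where
`(T_{−j} η) i = η (i−j) + 1_{i=0} − 1_{i=j}` (well defined in `ℕ^(ℤ^d)` with truncated
`ℕ`-subtraction, agreeing with the intended configuration whenever `η 0 ≥ 1`, which holds
`Q_α`-a.s.), and `g (η 0)/η 0` is interpreted as `0` when `η 0 = 0` (Lean's convention
`x / 0 = 0` together with `g 0 = 0` achieves this). -/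
theorem computation_lemma_fourth_identity
    (d : ℕ) (hd : 1 ≤ d)
    (g : ℕ → ℝ) (hg0 : g 0 = 0) (hgpos : ∀ k : ℕ, 1 ≤ k → 0 < g k)
    (α : ℝ) (hα0 : 0 < α)
    (hα : ENNReal.ofReal α <
      Filter.liminf (fun k : ℕ => ENNReal.ofReal (g k)) Filter.atTop)
    (w : ℕ → ℝ) (hw : ∀ k : ℕ, w k = α ^ k / ∏ j ∈ Finset.Icc 1 k, g j)
    (Z : ℝ) (hZ : Z = ∑' k : ℕ, w k)
    (ρ : ℝ) (hρ : ρ = ∑' k : ℕ, (k : ℝ) * (w k / Z))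
    (ν : (Fin d → ℤ) → Measure ℕ) (hνprob : ∀ i, IsProbabilityMeasure (ν i))
    (hν0 : ∀ n : ℕ, ν 0 {n} = ENNReal.ofReal (((n : ℝ) / ρ) * (w n / Z)))
    (hνi : ∀ i : Fin d → ℤ, i ≠ 0 → ∀ n : ℕ, ν i {n} = ENNReal.ofReal (w n / Z))
    (Q : Measure ((Fin d → ℤ) → ℕ)) (hQprob : IsProbabilityMeasure Q)
    (hQ : ∀ (s : Finset (Fin d → ℤ)) (a : (Fin d → ℤ) → ℕ),
      Q {η | ∀ i ∈ s, η i = a i} = ∏ i ∈ s, ν i {a i})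
    (j : Fin d → ℤ) (hj : j ≠ 0)
    (T : ((Fin d → ℤ) → ℕ) → ((Fin d → ℤ) → ℕ))
    (hT : ∀ η i, T η i =
      η (i - j) + (if i = 0 then 1 else 0) - (if i = j then 1 else 0))
    (ψ : ((Fin d → ℤ) → ℕ) → ℝ) (hψmeas : Measurable ψ)
    (hψbdd : ∃ C : ℝ, ∀ η, |ψ η| ≤ C) :
    ∫ η, ((η j : ℝ) + 1) * (g (η 0) / (η 0 : ℝ)) * ψ η ∂Q =
      ∫ η, g (η 0) * ψ (T η) ∂Q := by
  classical
  have hwpos : ∀ k, 0 < w k := by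
    intro k
    rw [hw]
    refine div_pos (pow_pos hα0 k) (Finset.prod_pos fun i hi => hgpos i (Finset.mem_Icc.1 hi).1)
  have hwsucc : ∀ k, g (k + 1) * w (k + 1) = α * w k := by
    intro k
    have h1 := hgpos (k + 1) (by omega)
    have h2 : 0 < ∏ i ∈ Finset.Icc 1 k, g i :=
      Finset.prod_pos fun i hi => hgpos i (Finset.mem_Icc.1 hi).1
    rw [hw, hw, Finset.prod_Icc_succ_top (by omega)]
    field_simp
    ring
  have hZ0 : 0 ≤ Z := hZ ▸ tsum_nonneg fun k => (hwpos k).le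
  have hρ0 : 0 ≤ ρ := hρ ▸ tsum_nonneg fun k =>
    mul_nonneg (Nat.cast_nonneg k) (div_nonneg (hwpos k).le hZ0)
  have hg : ∀ k, 0 ≤ g k := by
    intro k
    rcases Nat.eq_zero_or_pos k with h | h
    · rw [h, hg0]
    · exact (hgpos k h).le
  set f1 : ((Fin d → ℤ) → ℕ) → ENNReal := fun η =>
    ENNReal.ofReal (((η j : ℝ) + 1) * (g (η 0) / (η 0 : ℝ))) with hf1
  set f2 : ((Fin d → ℤ) → ℕ) → ENNReal := fun η => ENNReal.ofReal (g (η 0)) with hf2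
  have mg : Measurable fun η : (Fin d → ℤ) → ℕ => g (η 0) :=
    (measurable_of_countable g).comp (measurable_pi_apply 0)
  have mc : ∀ i, Measurable fun η : (Fin d → ℤ) → ℕ => (η i : ℝ) := fun i =>
    (measurable_of_countable (fun n : ℕ => (n : ℝ))).comp (measurable_pi_apply i)
  have mf1 : Measurable f1 :=
    ENNReal.measurable_ofReal.comp (((mc j).add_const 1).mul (mg.div (mc 0)))
  have mf2 : Measurable f2 := ENNReal.measurable_ofReal.comp mg
  have mT : Measurable T := by
    refine measurable_pi_lambda _ fun i => ?_
    simp only [hT]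
    exact (measurable_of_countable
      (fun n : ℕ => n + (if i = 0 then 1 else 0) - (if i = j then 1 else 0))).comp
      (measurable_pi_apply (i - j))
  have mcyl : ∀ (s : Finset (Fin d → ℤ)) (a : (Fin d → ℤ) → ℕ),
      MeasurableSet {η : (Fin d → ℤ) → ℕ | ∀ i ∈ s, η i = a i} := by
    intro s a
    have : {η : (Fin d → ℤ) → ℕ | ∀ i ∈ s, η i = a i} =
        ⋂ i ∈ s, (fun η : (Fin d → ℤ) → ℕ => η i) ⁻¹' {a i} := by
      ext η; simp
    rw [this]
    exact Finset.measurableSet_biInter _ fun i _ =>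
      measurable_pi_apply i (measurableSet_singleton _)
  have hval1 : ∀ (s : Finset (Fin d → ℤ)) (a : (Fin d → ℤ) → ℕ), 0 ∈ s → j ∈ s →
      Q.withDensity f1 {η | ∀ i ∈ s, η i = a i} =
        ENNReal.ofReal (((a j : ℝ) + 1) * (g (a 0) / (a 0 : ℝ))) * ∏ i ∈ s, ν i {a i} := by
    intro s a h0 h1
    rw [withDensity_apply _ (mcyl s a), ← hQ, ← setLIntegral_const]
    refine setLIntegral_congr_fun (mcyl s a) ?_
    intro η hη
    simp only [hf1]
    rw [hη 0 h0, hη j h1]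
  have key : ∀ (s : Finset (Fin d → ℤ)) (a : (Fin d → ℤ) → ℕ), 0 ∈ s → j ∈ s →
      Q.withDensity f1 {η | ∀ i ∈ s, η i = a i} =
        (Q.withDensity f2).map T {η | ∀ i ∈ s, η i = a i} := by
    intro s a h0 h1
    rw [hval1 s a h0 h1, Measure.map_apply mT (mcyl s a), withDensity_apply _ (mT (mcyl s a))]
    rcases Nat.eq_zero_or_pos (a 0) with ha | ha
    · have : T ⁻¹' {η | ∀ i ∈ s, η i = a i} = ∅ := by
        ext η
        simp only [Set.mem_preimage, Set.mem_ofPred_eq, Set.mem_empty_iff_false, iff_false]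
        intro h
        have := h 0 h0
        rw [hT, ha] at this
        simp [hj.symm] at this
      rw [this, ha]
      simp
    · obtain ⟨m, hm⟩ : ∃ m, a 0 = m + 1 := ⟨a 0 - 1, by omega⟩
      set b : (Fin d → ℤ) → ℕ := fun i =>
        a (i + j) + (if i = 0 then 1 else 0) - (if i = -j then 1 else 0) with hb
      have hind : (T ⁻¹' {η | ∀ i ∈ s, η i = a i}).indicator f2 =
          ({η | ∀ i ∈ s.image (fun i => i - j), η i = b i}).indicator
            (fun _ => ENNReal.ofReal (g (a j + 1))) := by
        funext η
        by_cases hη : η 0 = 0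
        · have e1 : f2 η = 0 := by simp [hf2, hη, hg0]
          have e2 : η ∉ {η : (Fin d → ℤ) → ℕ | ∀ i ∈ s.image (fun i => i - j), η i = b i} := by
            intro h
            have := h 0 (Finset.mem_image.2 ⟨j, h1, sub_self j⟩)
            rw [hη] at this
            have hj' : (0 : Fin d → ℤ) ≠ -j := fun h => hj (by simpa using h.symm)
            simp [hb, hj'] at this
          rw [Set.indicator_of_notMem e2, Set.indicator_apply, e1, ite_self]
        · have hiff : ∀ i, T η i = a i ↔ η (i - j) = b (i - j) := by
            intro i
            rw [hT]
            simp only [hb, sub_add_cancel, sub_eq_zero]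
            by_cases hi0 : i = 0
            · subst hi0
              simp [hj.symm, hm]
            · by_cases hij : i = j
              · subst hij
                have hj' : (0 : Fin d → ℤ) ≠ -i := fun h => hj (by simpa using h.symm)
                simp [hj, hj']
                omega
              · have : i - j ≠ -j := fun h => hi0 (by
                  have := congrArg (· + j) h
                  simpa using this)
                simp [hi0, hij, this]
          have hmem : η ∈ T ⁻¹' {η | ∀ i ∈ s, η i = a i} ↔
              η ∈ {η : (Fin d → ℤ) → ℕ | ∀ i ∈ s.image (fun i => i - j), η i = b i} := by
            simp only [Set.mem_preimage, Set.mem_ofPred_eq, Finset.forall_mem_image, hiff]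
          by_cases h : η ∈ T ⁻¹' {η | ∀ i ∈ s, η i = a i}
          · rw [Set.indicator_of_mem h, Set.indicator_of_mem (hmem.1 h)]
            have h3 := h j h1
            rw [hT] at h3
            simp [hj] at h3
            have : η 0 = a j + 1 := by omega
            simp only [hf2, this]
          · rw [Set.indicator_of_notMem h, Set.indicator_of_notMem (fun h' => h (hmem.2 h'))]
      rw [← lintegral_indicator (mT (mcyl s a)), hind, lintegral_indicator (mcyl _ _),
        setLIntegral_const, hQ, Finset.prod_image (fun x _ y _ h => sub_left_injective h)]
      have h1' : j ∈ s.erase 0 := Finset.mem_erase.2 ⟨hj, h1⟩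
      rw [← Finset.mul_prod_erase s _ h0, ← Finset.mul_prod_erase (s.erase 0) _ h1',
        ← Finset.mul_prod_erase s (fun i => ν (i - j) {b (i - j)}) h0,
        ← Finset.mul_prod_erase (s.erase 0) (fun i => ν (i - j) {b (i - j)}) h1']
      have hrest : ∏ i ∈ (s.erase 0).erase j, ν (i - j) {b (i - j)} =
          ∏ i ∈ (s.erase 0).erase j, ν i {a i} := by
        refine Finset.prod_congr rfl fun i hi => ?_
        simp only [Finset.mem_erase] at hi
        have hij : i - j ≠ 0 := sub_ne_zero.2 hi.1
        have hi0 : i - j ≠ -j := fun h => hi.2.1 (by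
          have := congrArg (· + j) h
          simpa using this)
        rw [hνi _ hij, hνi _ hi.2.1]
        simp [hb, hij, hi0]
      rw [hrest, ← mul_assoc, ← mul_assoc, ← mul_assoc, ← mul_assoc]
      congr 1
      have hnj : -j ≠ 0 := neg_ne_zero.2 hj
      have b0 : b 0 = a j + 1 := by simp [hb, hnj.symm]
      have bj : b (-j) = m := by simp [hb, hj, hm]
      rw [zero_sub, sub_self, b0, bj, hm, hν0, hν0, hνi _ hj, hνi _ hnj]
      have p1 : 0 ≤ ((a j : ℝ) + 1) * (g (m + 1) / ((m + 1 : ℕ) : ℝ)) := by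
        have := hg (m + 1)
        positivity
      have p2 : 0 ≤ (((m + 1 : ℕ) : ℝ) / ρ) * (w (m + 1) / Z) := by
        have := (hwpos (m + 1)).le
        positivity
      have p3 : 0 ≤ w m / Z := div_nonneg (hwpos m).le hZ0
      rw [← ENNReal.ofReal_mul p1, ← ENNReal.ofReal_mul (mul_nonneg p1 p2),
        ← ENNReal.ofReal_mul (hg _), ← ENNReal.ofReal_mul (mul_nonneg (hg _) p3)]
      congr 1
      have q1 := hwsucc m
      have q2 := hwsucc (a j)
      have hm0 : ((m + 1 : ℕ) : ℝ) ≠ 0 := by positivity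
      calc ((a j : ℝ) + 1) * (g (m + 1) / ((m + 1 : ℕ) : ℝ)) *
            ((((m + 1 : ℕ) : ℝ) / ρ) * (w (m + 1) / Z)) * (w (a j) / Z)
          = ((a j : ℝ) + 1) * (((m + 1 : ℕ) : ℝ) * (((m + 1 : ℕ) : ℝ))⁻¹) * ρ⁻¹ * Z⁻¹ * Z⁻¹ *
              (g (m + 1) * w (m + 1)) * w (a j) := by ring
        _ = ((a j : ℝ) + 1) * ρ⁻¹ * Z⁻¹ * Z⁻¹ * (α * w (a j)) * w m := by
            rw [q1, mul_inv_cancel₀ hm0]; ring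
        _ = _ := by
            rw [← q2]; push_cast; ring
  have hmeas : Q.withDensity f1 = (Q.withDensity f2).map T := by
    let S : Set (Set ((Fin d → ℤ) → ℕ)) :=
      {C | ∃ (s : Finset (Fin d → ℤ)) (a : (Fin d → ℤ) → ℕ), 0 ∈ s ∧ j ∈ s ∧
        C = {η | ∀ i ∈ s, η i = a i}}
    let B : Set (Set ((Fin d → ℤ) → ℕ)) :=
      Set.range fun p : ℕ × ℕ => {η | ∀ i ∈ ({0, j} : Finset (Fin d → ℤ)),
        η i = (fun i => if i = 0 then p.1 else p.2) i}
    refine Measure.ext_of_generateFrom_of_cover_subset (S := S) (T := B) ?_ ?_ ?_ ?_ ?_ ?_ ?_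
    · apply le_antisymm
      · have hev : ∀ i : Fin d → ℤ, @Measurable _ _ (MeasurableSpace.generateFrom S) _
            (fun η : (Fin d → ℤ) → ℕ => η i) := by
          intro i
          refine @measurable_to_countable' _ _ _ _ (MeasurableSpace.generateFrom S) _ fun n => ?_
          have : (fun η : (Fin d → ℤ) → ℕ => η i) ⁻¹' {n} =
              ⋃ p : ℕ × ℕ, {η | η 0 = p.1 ∧ η j = p.2 ∧ η i = n} := by
            ext η; simp
          rw [this]
          refine @MeasurableSet.iUnion _ _ (MeasurableSpace.generateFrom S) _ _ fun p => ?_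
          rcases Set.eq_empty_or_nonempty
            {η : (Fin d → ℤ) → ℕ | η 0 = p.1 ∧ η j = p.2 ∧ η i = n} with he | ⟨a, ha⟩
          · rw [he]; exact @MeasurableSet.empty _ (MeasurableSpace.generateFrom S)
          · refine MeasurableSpace.measurableSet_generateFrom
              ⟨{0, j, i}, a, by simp, by simp, ?_⟩
            ext η
            simp [ha.1, ha.2.1, ha.2.2]
        exact iSup_le fun i => (hev i).comap_le
      · refine MeasurableSpace.generateFrom_le ?_
        rintro _ ⟨s, a, _, _, rfl⟩
        exact mcyl s a
    · rintro _ ⟨s, a, h0, h1, rfl⟩ _ ⟨t, b, _, _, rfl⟩ ⟨c, hc1, hc2⟩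
      refine ⟨s ∪ t, c, Finset.mem_union_left _ h0, Finset.mem_union_left _ h1, ?_⟩
      ext η
      simp only [Set.mem_inter_iff, Set.mem_ofPred_eq, Finset.mem_union]
      constructor
      · rintro ⟨u, v⟩ i (hi | hi)
        · rw [u i hi, hc1 i hi]
        · rw [v i hi, hc2 i hi]
      · intro u
        exact ⟨fun i hi => by rw [u i (Or.inl hi), hc1 i hi],
          fun i hi => by rw [u i (Or.inr hi), hc2 i hi]⟩
    · rintro _ ⟨p, rfl⟩
      exact ⟨{0, j}, _, by simp, by simp, rfl⟩
    · exact Set.countable_range _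
    · refine Set.eq_univ_of_forall fun η => ?_
      refine Set.mem_sUnion.2 ⟨_, ⟨(η 0, η j), rfl⟩, ?_⟩
      simp [hj]
    · rintro _ ⟨p, rfl⟩
      rw [hval1 _ _ (by simp) (by simp), ← hQ]
      exact ENNReal.mul_ne_top ENNReal.ofReal_ne_top (measure_ne_top _ _)
    · rintro _ ⟨s, a, h0, h1, rfl⟩
      exact key s a h0 h1
  have i1 := integral_withDensity_eq_integral_toReal_smul (μ := Q) mf1
    (Filter.Eventually.of_forall fun η => ENNReal.ofReal_lt_top) ψ
  have i2 := integral_withDensity_eq_integral_toReal_smul (μ := Q) mf2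
    (Filter.Eventually.of_forall fun η => ENNReal.ofReal_lt_top) (fun η => ψ (T η))
  have i3 := integral_map (μ := Q.withDensity f2) mT.aemeasurable
    (hψmeas.aestronglyMeasurable (μ := (Q.withDensity f2).map T))
  rw [← hmeas, i1, i2] at i3
  have e1 : ∀ η : (Fin d → ℤ) → ℕ,
      (f1 η).toReal = ((η j : ℝ) + 1) * (g (η 0) / (η 0 : ℝ)) := by
    intro η
    have := hg (η 0)
    exact ENNReal.toReal_ofReal (by positivity)
  have e2 : ∀ η : (Fin d → ℤ) → ℕ, (f2 η).toReal = g (η 0) := fun η =>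
    ENNReal.toReal_ofReal (hg _)
  simpa only [e1, e2, smul_eq_mul] using i3
end
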